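/- arXiv:1209.4347 — 3 statements merged into one kernel-verified Lean document; each statement's English description precedes it below -/
import Mathlib

section
/- The Hodge dual 4-form ψ of the standard G₂ 3-form φ on ℝ^7 satisfies the contraction identity ψ_{abcd} ψ^{mnpq} = 24 δ_a^{[m} δ_b^{n} δ_c^{p} δ_d^{q]} + 72 ψ_{[ab}{}^{[mn} δ_c^{p} δ_{d]}^{q]} − 16 φ_{[abc} φ^{[mnp} δ_{d]}^{q]} for all indices a, b, c, d, m, n, p, q, where square brackets denote separate antisymmetrization over the lower index group a, b, c, d and over the upper index group m, n, p, q. -/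
open scoped BigOperators

/-- Components of the standard G₂ 3-form `φ` on the seven ordered (0-indexed) index
triples corresponding to `φ₁₂₃ = φ₁₄₅ = φ₁₆₇ = φ₂₄₆ = 1`, `φ₂₅₇ = φ₃₄₇ = φ₃₅₆ = -1`. -/
def phi0 : ℕ → ℕ → ℕ → ℝ
  | 0, 1, 2 => 1
  | 0, 3, 4 => 1
  | 0, 5, 6 => 1
  | 1, 3, 5 => 1
  | 1, 4, 6 => -1
  | 2, 3, 6 => -1
  | 2, 4, 5 => -1
  | _, _, _ => 0

/-- The standard G₂ 3-form `φ` on `ℝ⁷`, as a totally antisymmetric 3-tensor. -/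
def phi (a b c : Fin 7) : ℝ :=
  phi0 a.val b.val c.val - phi0 a.val c.val b.val + phi0 b.val c.val a.val
    - phi0 b.val a.val c.val + phi0 c.val a.val b.val - phi0 c.val b.val a.val

/-- The Levi-Civita symbol on seven indices, with `ε 1234567 = 1`. -/
noncomputable def eps (v : Fin 7 → Fin 7) : ℝ :=
  if h : Function.Bijective v then ((Equiv.Perm.sign (Equiv.ofBijective v h) : ℤ) : ℝ) else 0

/-- The 4-form `ψ = ⋆φ`, `ψ_{abcd} = (1/6) ε_{abcdmnp} φ^{mnp}`. -/
noncomputable def psi (a b c d : Fin 7) : ℝ :=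
  (1 / 6 : ℝ) * ∑ m : Fin 7, ∑ n : Fin 7, ∑ p : Fin 7,
    eps ![a, b, c, d, m, n, p] * phi m n p

/-- The Euclidean metric `g_{ab} = δ_{ab}` on `ℝ⁷`. -/
def gE (a b : Fin 7) : ℝ := if a = b then 1 else 0

/-- Antisymmetrization of a 4-tensor over its four indices. -/
noncomputable def alt4 (T : Fin 7 → Fin 7 → Fin 7 → Fin 7 → ℝ) (a b c d : Fin 7) : ℝ :=
  (1 / 24 : ℝ) * ∑ σ : Equiv.Perm (Fin 4),
    ((Equiv.Perm.sign σ : ℤ) : ℝ) *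
      T (![a, b, c, d] (σ 0)) (![a, b, c, d] (σ 1)) (![a, b, c, d] (σ 2)) (![a, b, c, d] (σ 3))

/-!
Let `S` and `T` be 3-forms on `ℝ⁷`. Contracting `vol` by `S` gives `⋆S`, and
`e_a ∧ e_b ∧ e_c ∧ e_d ∧ T = (⋆T)_{abcd} vol`, so `(⋆T)_{abcd} (⋆S)_{mnpq}` is the `mnpq`-component
of the contraction of `e_a ∧ e_b ∧ e_c ∧ e_d ∧ T` by `S`. Moving this contraction to the right by
the Leibniz rule, `r` of its three slots are absorbed by the wedge factors and `3 - r` by `T`; the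
terms `r = 0, 1, 2, 3` expand `⋆T ⊗ ⋆S` in the contractions of `S` with `T`.
For `S = T = φ` every contraction follows from `φ_{abk} φ_{kcd} = g_{ac} g_{bd} - g_{ad} g_{bc} +
ψ_{abcd}`, and the coefficient of the identity term is `4 * 42 - 48 * 6 + 72 * 2 = 24`.
-/

section AlternatingFamilies

variable {n : ℕ} {κ M : Type*} [AddCommGroup M] [Module ℝ M]

/-- A family indexed by `(n + 1)`-tuples that changes sign under each adjacent transposition of the
tuple, hence transforms by the sign character under all permutations. -/
def IsAlternatingFamily (F : (Fin (n + 1) → κ) → M) : Prop :=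
  ∀ (i : Fin n) (v : Fin (n + 1) → κ), F (v ∘ Equiv.swap i.castSucc i.succ) = -F v

variable {F : (Fin (n + 1) → κ) → M}

lemma IsAlternatingFamily.comp_perm (hF : IsAlternatingFamily F) (σ : Equiv.Perm (Fin (n + 1))) :
    ∀ v, F (v ∘ σ) = ((Equiv.Perm.sign σ : ℤ) : ℝ) • F v := by
  have hσ : σ ∈ Submonoid.closure (Set.range fun i : Fin n => Equiv.swap i.castSucc i.succ) := by
    rw [Equiv.Perm.mclosure_swap_castSucc_succ]
    trivial
  induction hσ using Submonoid.closure_induction with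
  | one => exact fun v => by simp
  | mem τ hτ =>
    obtain ⟨i, rfl⟩ := hτ
    intro v
    simp [hF i v, Equiv.Perm.sign_swap (Fin.castSucc_lt_succ (i := i)).ne]
  | mul σ τ _ _ hσ hτ =>
    intro v
    rw [Equiv.Perm.coe_mul, ← Function.comp_assoc, hτ, hσ, smul_smul, Equiv.Perm.sign_mul]
    push_cast
    rw [mul_comm]

lemma IsAlternatingFamily.eq_zero_of_not_injective (hF : IsAlternatingFamily F)
    {v : Fin (n + 1) → κ} (hv : ¬Function.Injective v) : F v = 0 := by
  obtain ⟨i, j, hij, hne⟩ := Function.not_injective_iff.mp hv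
  have hswap : v ∘ Equiv.swap i j = v := by
    funext k
    simp only [Function.comp_apply, Equiv.swap_apply_def]
    split_ifs with hi hj
    · rw [hi, hij]
    · rw [hj, hij]
    · rfl
  have hneg : F v = -F v := by
    conv_lhs => rw [← hswap, hF.comp_perm, Equiv.Perm.sign_swap hne]
    simp
  have htwo : (2 : ℝ) • F v = 0 := by
    rw [two_smul]
    exact add_eq_zero_iff_eq_neg.mpr hneg
  exact (smul_eq_zero_iff_right two_ne_zero).mp htwo

lemma IsAlternatingFamily.eq_eps_smul {F : (Fin 7 → Fin 7) → M} (hF : IsAlternatingFamily F)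
    (v : Fin 7 → Fin 7) : F v = eps v • F id := by
  by_cases hv : Function.Bijective v
  · rw [eps, dif_pos hv, ← hF.comp_perm, Function.id_comp, Equiv.coe_ofBijective]
  · rw [eps, dif_neg hv, zero_smul]
    exact hF.eq_zero_of_not_injective (mt Finite.injective_iff_bijective.mp hv)

lemma comp₇_eq_eps_smul {f : Fin 7 → Module.End ℝ M} (hf : ∀ a b x, f a (f b x) = -f b (f a x))
    (v : Fin 7 → Fin 7) (x : M) :
    f (v 0) (f (v 1) (f (v 2) (f (v 3) (f (v 4) (f (v 5) (f (v 6) x)))))) =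
      eps v • f 0 (f 1 (f 2 (f 3 (f 4 (f 5 (f 6 x)))))) := by
  refine IsAlternatingFamily.eq_eps_smul (F := fun v =>
    f (v 0) (f (v 1) (f (v 2) (f (v 3) (f (v 4) (f (v 5) (f (v 6) x))))))) (fun i w => ?_) v
  fin_cases i <;>
    simp [Equiv.swap_apply_def, hf (w 1) (w 0), hf (w 2) (w 1), hf (w 3) (w 2), hf (w 4) (w 3),
      hf (w 5) (w 4), hf (w 6) (w 5)]

end AlternatingFamilies

lemma eps_comp (v : Fin 7 → Fin 7) (σ : Equiv.Perm (Fin 7)) :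
    eps (v ∘ σ) = ((Equiv.Perm.sign σ : ℤ) : ℝ) * eps v := by
  by_cases hv : Function.Bijective v
  · have hcomp : Equiv.ofBijective (v ∘ σ) (hv.comp σ.bijective) =
        Equiv.ofBijective v hv * σ := by
      ext
      rfl
    rw [eps, eps, dif_pos hv, dif_pos (hv.comp σ.bijective), hcomp, Equiv.Perm.sign_mul]
    push_cast
    ring
  · rw [eps, eps, dif_neg hv, dif_neg (mt (Function.Bijective.of_comp_iff v σ.bijective).mp hv),
      mul_zero]

lemma eps_reverse (a b c d i j k : Fin 7) :
    eps ![d, c, b, a, k, j, i] = -eps ![a, b, c, d, i, j, k] := by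
  let σ : Equiv.Perm (Fin 7) := Equiv.swap 0 3 * Equiv.swap 1 2 * Equiv.swap 4 6
  have hvec : ![d, c, b, a, k, j, i] = ![a, b, c, d, i, j, k] ∘ σ := by
    ext x
    fin_cases x <;> rfl
  have hsign : Equiv.Perm.sign σ = -1 := by
    simp [σ, Equiv.Perm.sign_mul]
  simp [hvec, eps_comp, hsign]

/-- Alternation of a 3-tensor, expressed by the two adjacent transpositions of its indices. -/
structure IsAlternating₃ {ι : Type*} (T : ι → ι → ι → ℝ) : Prop where
  swap_left : ∀ a b c, T b a c = -T a b c
  swap_right : ∀ a b c, T a c b = -T a b c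

lemma IsAlternating₃.cyclic {ι : Type*} {T : ι → ι → ι → ℝ} (hT : IsAlternating₃ T) (a b c : ι) :
    T a b c = T b c a := by
  rw [hT.swap_right b a, hT.swap_left a b, neg_neg]

lemma IsAlternating₃.sum_perm {ι : Type*} {T : ι → ι → ι → ℝ} (hT : IsAlternating₃ T) (i j k : ι) :
    T i j k - T i k j - T j i k + T j k i + T k i j - T k j i = 6 * T i j k := by
  rw [hT.swap_right k i, hT.swap_right j i, hT.swap_left i k, hT.swap_right i j, hT.swap_left i j]
  ring

lemma isAlternating₃_eps (a b c d : Fin 7) :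
    IsAlternating₃ fun i j k => eps ![a, b, c, d, i, j, k] where
  swap_left i j k := by
    have hvec : ![a, b, c, d, j, i, k] = ![a, b, c, d, i, j, k] ∘ Equiv.swap 4 5 := by
      ext x
      fin_cases x <;> rfl
    simp [hvec, eps_comp]
  swap_right i j k := by
    have hvec : ![a, b, c, d, i, k, j] = ![a, b, c, d, i, j, k] ∘ Equiv.swap 5 6 := by
      ext x
      fin_cases x <;> rfl
    simp [hvec, eps_comp]

/-- The product of the signs of `y - x` over all pairs of entries with `x` before `y`. It computes
the Levi-Civita symbol by a structural recursion that evaluates quickly in the kernel. -/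
def inversionSign : List (Fin 7) → ℤ
  | [] => 1
  | x :: l => (l.map fun y : Fin 7 => Int.sign ((y : ℤ) - x)).prod * inversionSign l

lemma eps_eq_inversionSign (a b c d i j k : Fin 7) :
    eps ![a, b, c, d, i, j, k] = inversionSign [a, b, c, d, i, j, k] := by
  have hsign (x y : Fin 7) : Int.sign ((x : ℤ) - y) = -Int.sign ((y : ℤ) - x) := by
    rw [← Int.sign_neg, neg_sub]
  have halt : IsAlternatingFamily fun v : Fin 7 → Fin 7 =>
      (inversionSign [v 0, v 1, v 2, v 3, v 4, v 5, v 6] : ℝ) := by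
    intro r v
    fin_cases r <;>
      simp only [inversionSign, Fin.reduceFinMk, Fin.reduceCastSucc, Fin.reduceSucc, Fin.isValue,
        Function.comp_apply, Equiv.swap_apply_def, Fin.reduceEq, ↓reduceIte, List.map_cons,
        List.map_nil, List.prod_cons, List.prod_nil, hsign (v 0) (v 1), hsign (v 1) (v 2),
        hsign (v 2) (v 3), hsign (v 3) (v 4), hsign (v 4) (v 5), hsign (v 5) (v 6)] <;>
      push_cast <;>
      ring
  have hid : inversionSign [0, 1, 2, 3, 4, 5, 6] = 1 := by decide
  simpa [hid] using (halt.eq_eps_smul ![a, b, c, d, i, j, k]).symm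

lemma alt4_eq_sum (T : Fin 7 → Fin 7 → Fin 7 → Fin 7 → ℝ) (a b c d : Fin 7) :
    alt4 T a b c d = (1 / 24) * (
      T a b c d - T a b d c - T a c b d + T a c d b + T a d b c - T a d c b
      - T b a c d + T b a d c + T b c a d - T b c d a - T b d a c + T b d c a
      + T c a b d - T c a d b - T c b a d + T c b d a + T c d a b - T c d b a
      - T d a b c + T d a c b + T d b a c - T d b c a - T d c a b + T d c b a) := by
  have hone : (1 : Fin 4) = Fin.succ 0 := rfl
  have htwo : (2 : Fin 4) = Fin.succ (Fin.succ 0) := rfl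
  have hthree : (3 : Fin 4) = Fin.succ (Fin.succ (Fin.succ 0)) := rfl
  simp only [alt4, hone, htwo, hthree, Finset.univ_perm_fin_succ, Finset.sum_map,
    Equiv.coe_toEmbedding, ← Finset.univ_product_univ, Finset.sum_product, Fin.sum_univ_succ,
    Finset.univ_unique, Finset.sum_singleton, Equiv.Perm.decomposeFin.symm_sign,
    Equiv.Perm.decomposeFin_symm_apply_zero, Equiv.Perm.decomposeFin_symm_apply_succ]
  simp only [↓reduceIte, Equiv.Perm.default_eq, Equiv.Perm.sign_one, mul_one, Units.val_one,
    Int.cast_one, Fin.isValue, Equiv.swap_self, Fin.succ_zero_eq_one, Equiv.refl_apply,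
    Matrix.cons_val, Fin.succ_one_eq_two, Equiv.Perm.coe_one, id_eq, Fin.reduceSucc,
    Fin.default_eq_zero, mul_neg, Units.val_neg, Int.cast_neg, Equiv.swap_apply_def, Fin.reduceEq]
  ring

lemma alt4_swap (F : Fin 7 → Fin 7 → Fin 7 → Fin 7 → ℝ) (a b c d : Fin 7) :
    alt4 (fun a b c d => F b a c d) a b c d = -alt4 F a b c d := by
  simp only [alt4_eq_sum]
  ring

lemma alt4_add (F G : Fin 7 → Fin 7 → Fin 7 → Fin 7 → ℝ) (a b c d : Fin 7) :
    alt4 (fun a b c d => F a b c d + G a b c d) a b c d = alt4 F a b c d + alt4 G a b c d := by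
  simp only [alt4, mul_add, Finset.sum_add_distrib]

lemma alt4_sub (F G : Fin 7 → Fin 7 → Fin 7 → Fin 7 → ℝ) (a b c d : Fin 7) :
    alt4 (fun a b c d => F a b c d - G a b c d) a b c d = alt4 F a b c d - alt4 G a b c d := by
  simp only [alt4, mul_sub, Finset.sum_sub_distrib]

lemma alt4_const_mul (r : ℝ) (F : Fin 7 → Fin 7 → Fin 7 → Fin 7 → ℝ) (a b c d : Fin 7) :
    alt4 (fun a b c d => r * F a b c d) a b c d = r * alt4 F a b c d := by
  simp only [alt4, mul_left_comm _ r, ← Finset.mul_sum]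

section PartiallyAlternating

variable {F : Fin 7 → Fin 7 → Fin 7 → Fin 7 → ℝ}

lemma alt4_of_swap_pairs (h₁₂ : ∀ a b c d, F b a c d = -F a b c d)
    (h₃₄ : ∀ a b c d, F a b d c = -F a b c d) (a b c d : Fin 7) :
    alt4 F a b c d =
      (1 / 6) * (F a b c d - F a c b d + F a d b c + F b c a d - F b d a c + F c d a b) := by
  have hsum (x y z w : Fin 7) :
      F x y z w - F y x z w - F x y w z + F y x w z = 4 * F x y z w := by
    rw [h₃₄ y x, h₃₄ x y, h₁₂ x y]
    ring
  rw [alt4_eq_sum]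
  linear_combination (1 / 24) * (hsum a b c d - hsum a c b d + hsum a d b c + hsum b c a d -
    hsum b d a c + hsum c d a b)

lemma alt4_of_swap_first_three (h₁₂ : ∀ a b c d, F b a c d = -F a b c d)
    (h₂₃ : ∀ a b c d, F a c b d = -F a b c d) (a b c d : Fin 7) :
    alt4 F a b c d = (1 / 4) * (F a b c d - F a b d c + F a c d b - F b c d a) := by
  have hsum (x y z w : Fin 7) :
      F x y z w - F x z y w - F y x z w + F y z x w + F z x y w - F z y x w = 6 * F x y z w := by
    rw [h₂₃ z x, h₂₃ y x, h₁₂ x z, h₂₃ x y, h₁₂ x y]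
    ring
  rw [alt4_eq_sum]
  linear_combination (1 / 24) * (hsum a b c d - hsum a b d c + hsum a c d b - hsum b c d a)

lemma alt4_of_swap_last_three (h₂₃ : ∀ a b c d, F a c b d = -F a b c d)
    (h₃₄ : ∀ a b c d, F a b d c = -F a b c d) (a b c d : Fin 7) :
    alt4 F a b c d = (1 / 4) * (F a b c d - F b a c d + F c a b d - F d a b c) := by
  have hsum (w x y z : Fin 7) :
      F w x y z - F w x z y - F w y x z + F w y z x + F w z x y - F w z y x = 6 * F w x y z := by
    rw [h₃₄ w z x y, h₂₃ w x z, h₃₄ w y x z, h₂₃ w x y, h₃₄ w x y]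
    ring
  rw [alt4_eq_sum]
  linear_combination (1 / 24) * (hsum a b c d - hsum b a c d + hsum c a b d - hsum d a b c)

lemma alt4_of_alternating (h₁₂ : ∀ a b c d, F b a c d = -F a b c d)
    (h₂₃ : ∀ a b c d, F a c b d = -F a b c d) (h₃₄ : ∀ a b c d, F a b d c = -F a b c d)
    (a b c d : Fin 7) : alt4 F a b c d = F a b c d := by
  rw [alt4_of_swap_last_three h₂₃ h₃₄, h₁₂ a b, h₁₂ a c, h₂₃ a b c d, h₁₂ a d, h₂₃ a b d c,
    h₃₄ a b c d]
  ring

end PartiallyAlternating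

/-- The exterior algebra on the coordinate covectors of `ℝ^ι`. A covector is the family of its
components, which Euclidean index raising identifies with a vector. -/
abbrev Forms (ι : Type*) : Type _ := ExteriorAlgebra ℝ (ι → ℝ)

section ExteriorCalculus

variable {ι : Type*}

/-- The 1-form with components `v`. -/
noncomputable def form₁ : (ι → ℝ) →ₗ[ℝ] Forms ι :=
  ExteriorAlgebra.ι ℝ

/-- The interior product with the `a`-th coordinate vector, an antiderivation of degree `-1`. -/
noncomputable def interiorProd (a : ι) : Forms ι →ₗ[ℝ] Forms ι :=
  CliffordAlgebra.contractLeft (LinearMap.proj a)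

lemma interiorProd_swap (a b : ι) (x : Forms ι) :
    interiorProd b (interiorProd a x) = -interiorProd a (interiorProd b x) :=
  CliffordAlgebra.contractLeft_comm _ _ _

lemma interiorProd_one (a : ι) : interiorProd a (1 : Forms ι) = 0 :=
  CliffordAlgebra.contractLeft_one _ _

lemma interiorProd_form₁_mul (a : ι) (v : ι → ℝ) (x : Forms ι) :
    interiorProd a (form₁ v * x) = v a • x - form₁ v * interiorProd a x :=
  CliffordAlgebra.contractLeft_ι_mul _ _ _

lemma interiorProd_form₁ (a : ι) (v : ι → ℝ) : interiorProd a (form₁ v) = v a • 1 := by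
  simpa only [mul_one, interiorProd_one, mul_zero, sub_zero] using interiorProd_form₁_mul a v 1

section Contractions

variable [Fintype ι]

/-- Contraction of a form by the vector `v`. -/
noncomputable def contract₁ (v : ι → ℝ) : Forms ι →ₗ[ℝ] Forms ι :=
  ∑ i, v i • interiorProd i

/-- Contraction of a form by the bivector `½ B_{ij} e_i ∧ e_j`, whose first slot acts first. -/
noncomputable def contract₂ (B : ι → ι → ℝ) : Forms ι →ₗ[ℝ] Forms ι :=
  (1 / 2 : ℝ) • ∑ i, contract₁ (B i) ∘ₗ interiorProd i

/-- Contraction of a form by the trivector `⅙ T_{ijk} e_i ∧ e_j ∧ e_k`, whose first slot acts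
first. -/
noncomputable def contract₃ (T : ι → ι → ι → ℝ) : Forms ι →ₗ[ℝ] Forms ι :=
  (1 / 3 : ℝ) • ∑ i, contract₂ (T i) ∘ₗ interiorProd i

lemma contract₁_apply (v : ι → ℝ) (x : Forms ι) :
    contract₁ v x = ∑ i, v i • interiorProd i x := by
  simp [contract₁]

lemma contract₂_apply (B : ι → ι → ℝ) (x : Forms ι) :
    contract₂ B x = (1 / 2 : ℝ) • ∑ i, contract₁ (B i) (interiorProd i x) := by
  simp [contract₂]

lemma contract₃_apply (T : ι → ι → ι → ℝ) (x : Forms ι) :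
    contract₃ T x = (1 / 3 : ℝ) • ∑ i, contract₂ (T i) (interiorProd i x) := by
  simp [contract₃]

lemma contract₃_eq_sum (T : ι → ι → ι → ℝ) (x : Forms ι) :
    contract₃ T x = (1 / 6 : ℝ) •
      ∑ i, ∑ j, ∑ k, T i j k • interiorProd k (interiorProd j (interiorProd i x)) := by
  simp only [contract₃_apply, contract₂_apply, contract₁_apply, ← Finset.smul_sum, smul_smul]
  norm_num

end Contractions

variable [DecidableEq ι]

/-- The coordinate 1-form `e_a`. -/
noncomputable def basisForm (a : ι) : Forms ι :=
  form₁ (Pi.single a 1)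

lemma basisForm_mul_swap (a b : ι) (x : Forms ι) :
    basisForm b * (basisForm a * x) = -(basisForm a * (basisForm b * x)) := by
  rw [← mul_assoc, ← mul_assoc, ← neg_mul]
  exact congrArg (· * x) (eq_neg_of_add_eq_zero_left (ExteriorAlgebra.ι_add_mul_swap _ _))

lemma interiorProd_basisForm_mul (a b : ι) (x : Forms ι) :
    interiorProd a (basisForm b * x) =
      (if b = a then (1 : ℝ) else 0) • x - basisForm b * interiorProd a x := by
  simp only [basisForm, interiorProd_form₁_mul, Pi.single_apply, eq_comm]

variable [Fintype ι]

lemma form₁_eq_sum (v : ι → ℝ) : form₁ v = ∑ i, v i • basisForm i := by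
  conv_lhs => rw [pi_eq_sum_univ' v]
  simp only [map_sum, map_smul, basisForm, Pi.single]

/-- The 2-form `½ B_{ij} e_i ∧ e_j`; its components are `B` when `B` is antisymmetric. -/
noncomputable def form₂ : (ι → ι → ℝ) →ₗ[ℝ] Forms ι :=
  (1 / 2 : ℝ) • ∑ i, LinearMap.mulLeft ℝ (basisForm i) ∘ₗ form₁ ∘ₗ LinearMap.proj i

lemma form₂_apply (B : ι → ι → ℝ) : form₂ B = (1 / 2 : ℝ) • ∑ i, basisForm i * form₁ (B i) := by
  simp [form₂]

/-- The 3-form `⅙ T_{ijk} e_i ∧ e_j ∧ e_k`; its components are `T` when `T` is alternating. -/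
noncomputable def form₃ (T : ι → ι → ι → ℝ) : Forms ι :=
  (1 / 3 : ℝ) • ∑ i, basisForm i * form₂ (T i)

lemma form₃_eq_sum (T : ι → ι → ι → ℝ) :
    form₃ T =
      (1 / 6 : ℝ) • ∑ i, ∑ j, ∑ k, T i j k • (basisForm i * (basisForm j * (basisForm k * 1))) := by
  simp only [form₃, form₂_apply, form₁_eq_sum (T _ _), Finset.mul_sum, mul_smul_comm,
    ← Finset.smul_sum, smul_smul, mul_one]
  norm_num

lemma interiorProd_form₂ {B : ι → ι → ℝ} (hB : ∀ a b, B b a = -B a b) (a : ι) :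
    interiorProd a (form₂ B) = form₁ (B a) := by
  have hsum : ∑ i, basisForm i * interiorProd a (form₁ (B i)) = -form₁ (B a) := by
    simp [interiorProd_form₁, form₁_eq_sum (B a), hB a]
  simp only [form₂_apply, map_smul, map_sum, interiorProd_basisForm_mul, Finset.sum_sub_distrib,
    hsum, ite_smul, one_smul, zero_smul, Finset.sum_ite_eq', Finset.mem_univ, if_true]
  module

lemma interiorProd_form₃ {T : ι → ι → ι → ℝ} (hT : IsAlternating₃ T) (a : ι) :
    interiorProd a (form₃ T) = form₂ (T a) := by
  have hcomponent (i : ι) : interiorProd a (form₂ (T i)) = -form₁ (T a i) := by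
    rw [interiorProd_form₂ (hT.swap_right i), ← map_neg]
    exact congrArg form₁ (funext (hT.swap_left a i))
  have hsum : ∑ i, basisForm i * interiorProd a (form₂ (T i)) = -(2 : ℝ) • form₂ (T a) := by
    simp [hcomponent, form₂_apply (T a)]
  simp only [form₃, map_smul, map_sum, interiorProd_basisForm_mul, Finset.sum_sub_distrib, hsum,
    ite_smul, one_smul, zero_smul, Finset.sum_ite_eq', Finset.mem_univ, if_true]
  module

lemma contract₁_basisForm_mul (v : ι → ℝ) (a : ι) (x : Forms ι) :
    contract₁ v (basisForm a * x) = v a • x - basisForm a * contract₁ v x := by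
  simp [contract₁_apply, interiorProd_basisForm_mul, smul_sub, Finset.mul_sum]

lemma contract₂_basisForm_mul {B : ι → ι → ℝ} (hB : ∀ a b, B b a = -B a b) (a : ι) (x : Forms ι) :
    contract₂ B (basisForm a * x) = contract₁ (B a) x + basisForm a * contract₂ B x := by
  have hsum : ∑ i, B i a • interiorProd i x = -contract₁ (B a) x := by
    simp [contract₁_apply, hB a]
  simp only [contract₂_apply, interiorProd_basisForm_mul, map_sub, map_smul,
    contract₁_basisForm_mul, Finset.sum_sub_distrib, hsum, mul_smul_comm, Finset.mul_sum]
  simp only [ite_smul, one_smul, zero_smul, Finset.sum_ite_eq, Finset.mem_univ, if_true]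
  module

lemma contract₃_basisForm_mul {T : ι → ι → ι → ℝ} (hT : IsAlternating₃ T) (a : ι) (x : Forms ι) :
    contract₃ T (basisForm a * x) = contract₂ (T a) x - basisForm a * contract₃ T x := by
  have hsum : ∑ i, contract₁ (T i a) (interiorProd i x) = -(2 : ℝ) • contract₂ (T a) x := by
    simp [contract₂_apply, contract₁_apply, hT.swap_left a]
  simp only [contract₃_apply, interiorProd_basisForm_mul, map_sub, map_smul,
    contract₂_basisForm_mul (hT.swap_right _), Finset.sum_sub_distrib, Finset.sum_add_distrib,
    hsum, mul_smul_comm, Finset.mul_sum]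
  simp only [ite_smul, one_smul, zero_smul, Finset.sum_ite_eq, Finset.mem_univ, if_true]
  module

lemma contract₁_form₃ (v : ι → ℝ) {T : ι → ι → ι → ℝ} (hT : IsAlternating₃ T) :
    contract₁ v (form₃ T) = form₂ (∑ k, v k • T k) := by
  simp only [contract₁_apply, interiorProd_form₃ hT, map_sum, map_smul]

lemma contract₂_form₃ (B : ι → ι → ℝ) {T : ι → ι → ι → ℝ} (hT : IsAlternating₃ T) :
    contract₂ B (form₃ T) = (1 / 2 : ℝ) • form₁ (∑ i, ∑ j, B i j • T i j) := by
  simp only [contract₂_apply, contract₁_apply, interiorProd_form₃ hT,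
    interiorProd_form₂ (hT.swap_right _), map_sum, map_smul]

lemma contract₃_form₃ (S : ι → ι → ι → ℝ) {T : ι → ι → ι → ℝ} (hT : IsAlternating₃ T) :
    contract₃ S (form₃ T) = ((1 / 6 : ℝ) * ∑ i, ∑ j, ∑ k, S i j k * T i j k) • 1 := by
  simp only [contract₃_apply, contract₂_apply, contract₁_apply, interiorProd_form₃ hT,
    interiorProd_form₂ (hT.swap_right _), interiorProd_form₁, smul_smul, ← Finset.sum_smul,
    ← Finset.mul_sum]
  congr 1
  ring

lemma contract₃_wedge₄ {S : ι → ι → ι → ℝ} (hS : IsAlternating₃ S) (m n p q : ι)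
    (x : Forms ι) :
    contract₃ S (basisForm m * (basisForm n * (basisForm p * (basisForm q * x)))) =
      basisForm m * (basisForm n * (basisForm p * (basisForm q * contract₃ S x))) +
      (basisForm n * (basisForm p * (basisForm q * contract₂ (S m) x)) -
        basisForm m * (basisForm p * (basisForm q * contract₂ (S n) x)) +
        basisForm m * (basisForm n * (basisForm q * contract₂ (S p) x)) -
        basisForm m * (basisForm n * (basisForm p * contract₂ (S q) x))) +
      (basisForm p * (basisForm q * contract₁ (S m n) x) -
        basisForm n * (basisForm q * contract₁ (S m p) x) +
        basisForm n * (basisForm p * contract₁ (S m q) x) +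
        basisForm m * (basisForm q * contract₁ (S n p) x) -
        basisForm m * (basisForm p * contract₁ (S n q) x) +
        basisForm m * (basisForm n * contract₁ (S p q) x)) +
      (S m n p • (basisForm q * x) - S m n q • (basisForm p * x) +
        S m p q • (basisForm n * x) - S n p q • (basisForm m * x)) := by
  simp only [contract₃_basisForm_mul hS, contract₂_basisForm_mul (hS.swap_right _),
    contract₁_basisForm_mul, mul_sub, mul_add, mul_smul_comm]
  abel

end ExteriorCalculus

lemma apply_contract₃_wedge₄ {S : Fin 7 → Fin 7 → Fin 7 → ℝ} (hS : IsAlternating₃ S)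
    (L : Forms (Fin 7) →ₗ[ℝ] ℝ) (a b c d : Fin 7) (x : Forms (Fin 7)) :
    L (contract₃ S (basisForm a * (basisForm b * (basisForm c * (basisForm d * x))))) =
      alt4 (fun a b c d =>
        L (basisForm a * (basisForm b * (basisForm c * (basisForm d * contract₃ S x))))) a b c d +
      4 * alt4 (fun a b c d =>
        L (basisForm b * (basisForm c * (basisForm d * contract₂ (S a) x)))) a b c d +
      6 * alt4 (fun a b c d => L (basisForm c * (basisForm d * contract₁ (S a b) x))) a b c d +
      4 * alt4 (fun a b c d => S a b c * L (basisForm d * x)) a b c d := by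
  have hcontract₁ (a b : Fin 7) : contract₁ (S b a) x = -contract₁ (S a b) x := by
    simp [contract₁_apply, hS.swap_left a b]
  have h₀ := alt4_of_alternating (F := fun a b c d =>
      L (basisForm a * (basisForm b * (basisForm c * (basisForm d * contract₃ S x)))))
    (fun a b c d => by rw [basisForm_mul_swap a b, map_neg])
    (fun a b c d => by rw [basisForm_mul_swap b c, mul_neg, map_neg])
    (fun a b c d => by rw [basisForm_mul_swap c d, mul_neg, mul_neg, map_neg]) a b c d
  have h₁ := alt4_of_swap_last_three (F := fun a b c d =>
      L (basisForm b * (basisForm c * (basisForm d * contract₂ (S a) x))))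
    (fun a b c d => by rw [basisForm_mul_swap b c, map_neg])
    (fun a b c d => by rw [basisForm_mul_swap c d, mul_neg, map_neg]) a b c d
  have h₂ := alt4_of_swap_pairs (F := fun a b c d =>
      L (basisForm c * (basisForm d * contract₁ (S a b) x)))
    (fun a b c d => by rw [hcontract₁ a b, mul_neg, mul_neg, map_neg])
    (fun a b c d => by rw [basisForm_mul_swap c d, map_neg]) a b c d
  have h₃ := alt4_of_swap_first_three (F := fun a b c d => S a b c * L (basisForm d * x))
    (fun a b c d => by rw [hS.swap_left a b, neg_mul])
    (fun a b c d => by rw [hS.swap_right a b, neg_mul]) a b c d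
  rw [contract₃_wedge₄ hS, h₀, h₁, h₂, h₃]
  simp only [map_add, map_sub, map_smul, smul_eq_mul]
  ring

/-- The coefficient of `e_a ∧ e_b ∧ e_c ∧ e_d` in a form. -/
noncomputable def coord₄ (a b c d : Fin 7) : Forms (Fin 7) →ₗ[ℝ] ℝ :=
  ExteriorAlgebra.algebraMapInv.toLinearMap ∘ₗ
    interiorProd d ∘ₗ interiorProd c ∘ₗ interiorProd b ∘ₗ interiorProd a

lemma coord₄_wedge₄ (m n p q a b c d : Fin 7) :
    coord₄ m n p q (basisForm a * (basisForm b * (basisForm c * (basisForm d * 1)))) =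
      24 * alt4 (fun m n p q => gE a m * gE b n * gE c p * gE d q) m n p q := by
  simp only [coord₄, LinearMap.comp_apply, interiorProd_basisForm_mul, map_sub, map_smul,
    interiorProd_one, mul_zero, alt4_eq_sum, smul_zero, sub_zero, AlgHom.toLinearMap_apply,
    map_one, gE, smul_eq_mul]
  ring

lemma coord₄_wedge₃_form₁ (m n p q b c d : Fin 7) (v : Fin 7 → ℝ) :
    coord₄ m n p q (basisForm b * (basisForm c * (basisForm d * form₁ v))) =
      -24 * alt4 (fun m n p q => v m * gE b n * gE c p * gE d q) m n p q := by
  simp only [coord₄, LinearMap.comp_apply, interiorProd_basisForm_mul, map_sub, map_smul,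
    interiorProd_form₁, interiorProd_one, mul_zero, alt4_eq_sum, smul_zero, sub_zero,
    AlgHom.toLinearMap_apply, map_one, gE, smul_eq_mul]
  ring

lemma coord₄_wedge₂_form₂ (m n p q c d : Fin 7) {B : Fin 7 → Fin 7 → ℝ}
    (hB : ∀ a b, B b a = -B a b) :
    coord₄ m n p q (basisForm c * (basisForm d * form₂ B)) =
      12 * alt4 (fun m n p q => B m n * gE c p * gE d q) m n p q := by
  simp only [coord₄, LinearMap.comp_apply, interiorProd_basisForm_mul, map_sub, map_smul,
    interiorProd_form₁, interiorProd_form₂ hB, interiorProd_one, mul_zero, alt4_eq_sum, smul_zero,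
    sub_zero, AlgHom.toLinearMap_apply, map_one, gE, smul_eq_mul]
  rw [hB m n, hB m p, hB m q, hB n p, hB n q, hB p q]
  ring

lemma coord₄_wedge_form₃ (m n p q d : Fin 7) {T : Fin 7 → Fin 7 → Fin 7 → ℝ}
    (hT : IsAlternating₃ T) :
    coord₄ m n p q (basisForm d * form₃ T) =
      -4 * alt4 (fun m n p q => T m n p * gE d q) m n p q := by
  rw [alt4_of_swap_first_three (fun m n p q => by rw [hT.swap_left m n, neg_mul])
    (fun m n p q => by rw [hT.swap_right m n, neg_mul])]
  simp only [coord₄, LinearMap.comp_apply, interiorProd_basisForm_mul, map_sub, map_smul,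
    interiorProd_form₁, interiorProd_form₂ (hT.swap_right _), interiorProd_form₃ hT,
    interiorProd_one, mul_zero, smul_zero, sub_zero, AlgHom.toLinearMap_apply,
    map_one, gE, smul_eq_mul]
  ring

/-- The components `(⋆T)_{abcd} = ⅙ ε_{abcdijk} T_{ijk}` of the Hodge dual of a 3-tensor. -/
noncomputable def hodge (T : Fin 7 → Fin 7 → Fin 7 → ℝ) (a b c d : Fin 7) : ℝ :=
  (1 / 6 : ℝ) * ∑ i, ∑ j, ∑ k, eps ![a, b, c, d, i, j, k] * T i j k

/-- The volume form `e_0 ∧ ⋯ ∧ e_6`. -/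
noncomputable def vol : Forms (Fin 7) :=
  basisForm 0 * (basisForm 1 * (basisForm 2 * (basisForm 3 *
    (basisForm 4 * (basisForm 5 * (basisForm 6 * 1))))))

lemma wedge₇_eq_eps_smul_vol (v : Fin 7 → Fin 7) :
    basisForm (v 0) * (basisForm (v 1) * (basisForm (v 2) * (basisForm (v 3) *
      (basisForm (v 4) * (basisForm (v 5) * (basisForm (v 6) * 1)))))) = eps v • vol :=
  comp₇_eq_eps_smul (f := fun a => LinearMap.mulLeft ℝ (basisForm a))
    (fun a b => basisForm_mul_swap b a) v 1

lemma interiorProd₇_vol (v : Fin 7 → Fin 7) :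
    interiorProd (v 0) (interiorProd (v 1) (interiorProd (v 2) (interiorProd (v 3)
      (interiorProd (v 4) (interiorProd (v 5) (interiorProd (v 6) vol)))))) = -eps v • 1 := by
  rw [comp₇_eq_eps_smul (f := interiorProd) (fun a b => interiorProd_swap b a)]
  simp [-mul_one, vol, interiorProd_basisForm_mul, interiorProd_one]

lemma wedge₄_form₃ (T : Fin 7 → Fin 7 → Fin 7 → ℝ) (a b c d : Fin 7) :
    basisForm a * (basisForm b * (basisForm c * (basisForm d * form₃ T))) =
      hodge T a b c d • vol := by
  have hwedge (i j k : Fin 7) :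
      basisForm a * (basisForm b * (basisForm c * (basisForm d *
        (basisForm i * (basisForm j * (basisForm k * 1)))))) =
        eps ![a, b, c, d, i, j, k] • vol :=
    wedge₇_eq_eps_smul_vol ![a, b, c, d, i, j, k]
  simp only [form₃_eq_sum, mul_smul_comm, Finset.mul_sum, hwedge, hodge, mul_smul,
    Finset.sum_smul, Finset.smul_sum, mul_comm (eps _)]

lemma coord₄_contract₃_vol (S : Fin 7 → Fin 7 → Fin 7 → ℝ) (a b c d : Fin 7) :
    coord₄ a b c d (contract₃ S vol) = hodge S a b c d := by
  have hcoord (i j k : Fin 7) :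
      coord₄ a b c d (interiorProd k (interiorProd j (interiorProd i vol))) =
        eps ![a, b, c, d, i, j, k] := by
    have hvol := congrArg ExteriorAlgebra.algebraMapInv
      (interiorProd₇_vol ![d, c, b, a, k, j, i])
    rw [eps_reverse, neg_neg, map_smul, map_one, smul_eq_mul, mul_one] at hvol
    exact hvol
  simp only [contract₃_eq_sum, hodge, map_smul, map_sum, hcoord, smul_eq_mul, mul_comm (eps _)]

theorem hodge_mul_hodge {S T : Fin 7 → Fin 7 → Fin 7 → ℝ} (hS : IsAlternating₃ S)
    (hT : IsAlternating₃ T) (a b c d m n p q : Fin 7) :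
    hodge T a b c d * hodge S m n p q =
      4 * (∑ i, ∑ j, ∑ k, S i j k * T i j k) * alt4 (fun a b c d =>
        alt4 (fun m n p q => gE a m * gE b n * gE c p * gE d q) m n p q) a b c d -
      48 * alt4 (fun a b c d => alt4 (fun m n p q =>
        (∑ i, ∑ j, S a i j * T i j m) * gE b n * gE c p * gE d q) m n p q) a b c d +
      72 * alt4 (fun a b c d => alt4 (fun m n p q =>
        (∑ k, S a b k * T k m n) * gE c p * gE d q) m n p q) a b c d -
      16 * alt4 (fun a b c d => alt4 (fun m n p q =>
        S a b c * T m n p * gE d q) m n p q) a b c d := by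
  have hcoord : hodge T a b c d * hodge S m n p q = coord₄ m n p q (contract₃ S
      (basisForm a * (basisForm b * (basisForm c * (basisForm d * form₃ T))))) := by
    rw [wedge₄_form₃, map_smul, map_smul, coord₄_contract₃_vol, smul_eq_mul]
  have hanti (a b m n : Fin 7) : (∑ k, S a b k • T k) n m = -(∑ k, S a b k • T k) m n := by
    simp [hT.swap_right _ m n]
  simp only [hcoord, apply_contract₃_wedge₄ hS, contract₃_form₃ S hT, contract₂_form₃ _ hT,
    contract₁_form₃ _ hT, mul_smul_comm, map_smul, coord₄_wedge₄, coord₄_wedge₃_form₁,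
    coord₄_wedge₂_form₂ _ _ _ _ _ _ (hanti _ _), coord₄_wedge_form₃ _ _ _ _ _ hT, smul_eq_mul,
    mul_left_comm (S _ _ _) (-4 : ℝ), alt4_const_mul, mul_assoc (S _ _ _), Finset.sum_apply,
    Pi.smul_apply]
  ring

/-- Integer copy of `phi0`, on which arithmetic can be evaluated. -/
def phi0Int : ℕ → ℕ → ℕ → ℤ
  | 0, 1, 2 => 1
  | 0, 3, 4 => 1
  | 0, 5, 6 => 1
  | 1, 3, 5 => 1
  | 1, 4, 6 => -1
  | 2, 3, 6 => -1
  | 2, 4, 5 => -1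
  | _, _, _ => 0

/-- Integer copy of `phi`, on which arithmetic can be evaluated. -/
def phiInt (a b c : Fin 7) : ℤ :=
  phi0Int a b c - phi0Int a c b + phi0Int b c a - phi0Int b a c + phi0Int c a b - phi0Int c b a

lemma phi_eq_phiInt (a b c : Fin 7) : phi a b c = phiInt a b c := by
  have hphi0 (i j k : ℕ) : phi0 i j k = phi0Int i j k := by
    unfold phi0 phi0Int
    split <;> simp
  simp [phi, phiInt, hphi0]

lemma isAlternating₃_phi : IsAlternating₃ phi where
  swap_left a b c := by
    unfold phi
    ring
  swap_right a b c := by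
    unfold phi
    ring

lemma sum_mul_phi {T : Fin 7 → Fin 7 → Fin 7 → ℝ} (hT : IsAlternating₃ T) :
    ∑ i, ∑ j, ∑ k, T i j k * phi i j k =
      6 * (T 0 1 2 + T 0 3 4 + T 0 5 6 + T 1 3 5 - T 1 4 6 - T 2 3 6 - T 2 4 5) := by
  simp only [phi, phi0, Fin.sum_univ_seven, Fin.isValue, Fin.coe_ofNat_eq_mod, Nat.zero_mod,
    Nat.one_mod, Nat.reduceMod, Nat.mod_succ]
  linear_combination hT.sum_perm 0 1 2 + hT.sum_perm 0 3 4 + hT.sum_perm 0 5 6 +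
    hT.sum_perm 1 3 5 - hT.sum_perm 1 4 6 - hT.sum_perm 2 3 6 - hT.sum_perm 2 4 5

lemma psi_eq_sum_eps (a b c d : Fin 7) :
    psi a b c d = eps ![a, b, c, d, 0, 1, 2] + eps ![a, b, c, d, 0, 3, 4] +
      eps ![a, b, c, d, 0, 5, 6] + eps ![a, b, c, d, 1, 3, 5] - eps ![a, b, c, d, 1, 4, 6] -
      eps ![a, b, c, d, 2, 3, 6] - eps ![a, b, c, d, 2, 4, 5] := by
  rw [psi, sum_mul_phi (isAlternating₃_eps a b c d)]
  ring

lemma sum_phiInt_mul_phiInt : ∀ a b c d : Fin 7, ∑ k, phiInt a b k * phiInt k c d =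
    (if a = c then 1 else 0) * (if b = d then 1 else 0) -
      (if a = d then 1 else 0) * (if b = c then 1 else 0) +
      (inversionSign [a, b, c, d, 0, 1, 2] + inversionSign [a, b, c, d, 0, 3, 4] +
        inversionSign [a, b, c, d, 0, 5, 6] + inversionSign [a, b, c, d, 1, 3, 5] -
        inversionSign [a, b, c, d, 1, 4, 6] - inversionSign [a, b, c, d, 2, 3, 6] -
        inversionSign [a, b, c, d, 2, 4, 5]) := by
  decide +kernel

lemma sum_phi_mul_phi (a b c d : Fin 7) :
    ∑ k, phi a b k * phi k c d = gE a c * gE b d - gE a d * gE b c + psi a b c d := by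
  simp only [psi_eq_sum_eps, eps_eq_inversionSign, phi_eq_phiInt, gE]
  exact_mod_cast sum_phiInt_mul_phiInt a b c d

lemma psi_self_second_fourth (a b c : Fin 7) : psi a b c b = 0 := by
  have heps (i j k : Fin 7) : eps ![a, b, c, b, i, j, k] = 0 :=
    dif_neg fun h => absurd (h.injective (a₁ := 1) (a₂ := 3) rfl) (by decide)
  simp [psi, heps]

lemma sum_sum_phi_mul_phi (a b : Fin 7) : ∑ i, ∑ j, phi a i j * phi i j b = 6 * gE a b := by
  have htrace (i : Fin 7) : ∑ j, phi a i j * phi i j b = gE a b - gE a i * gE i b := by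
    simp only [isAlternating₃_phi.cyclic _ _ b, sum_phi_mul_phi, psi_self_second_fourth, gE,
      if_true, mul_one, add_zero]
  have hcontract : ∑ i, gE a i * gE i b = gE a b := by simp [gE]
  simp only [htrace, Finset.sum_sub_distrib, hcontract, Finset.sum_const, Finset.card_univ,
    Fintype.card_fin, nsmul_eq_mul]
  ring

lemma sum_sum_sum_phi_mul_phi : ∑ i, ∑ j, ∑ k, phi i j k * phi i j k = 42 := by
  have htrace (i : Fin 7) : ∑ j, ∑ k, phi i j k * phi i j k = 6 * gE i i := by
    simp only [← sum_sum_phi_mul_phi, ← isAlternating₃_phi.cyclic i]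
  norm_num [htrace, gE]

lemma alt4_alt4_sum_sum_phi_mul_phi (a b c d m n p q : Fin 7) :
    alt4 (fun a b c d => alt4 (fun m n p q =>
        (∑ i, ∑ j, phi a i j * phi i j m) * gE b n * gE c p * gE d q) m n p q) a b c d =
      6 * alt4 (fun a b c d =>
        alt4 (fun m n p q => gE a m * gE b n * gE c p * gE d q) m n p q) a b c d := by
  simp only [sum_sum_phi_mul_phi, mul_assoc, alt4_const_mul]

lemma alt4_alt4_sum_phi_mul_phi (a b c d m n p q : Fin 7) :
    alt4 (fun a b c d => alt4 (fun m n p q =>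
        (∑ k, phi a b k * phi k m n) * gE c p * gE d q) m n p q) a b c d =
      2 * alt4 (fun a b c d =>
        alt4 (fun m n p q => gE a m * gE b n * gE c p * gE d q) m n p q) a b c d +
      alt4 (fun a b c d =>
        alt4 (fun m n p q => psi a b m n * gE c p * gE d q) m n p q) a b c d := by
  have hswap (a b c d : Fin 7) :
      alt4 (fun m n p q => gE a n * gE b m * gE c p * gE d q) m n p q =
        -alt4 (fun m n p q => gE a m * gE b n * gE c p * gE d q) m n p q :=
    alt4_swap (fun m n p q => gE a m * gE b n * gE c p * gE d q) m n p q
  simp only [sum_phi_mul_phi, add_mul, sub_mul, alt4_add, alt4_sub, hswap, sub_neg_eq_add,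
    ← two_mul, alt4_const_mul]

/-- `ψ_{abcd} ψ^{mnpq} = 24 δ_a^{[m} δ_b^n δ_c^p δ_d^{q]} + 72 ψ_{[ab}{}^{[mn} δ_c^p δ_{d]}^{q]}
  - 16 φ_{[abc} φ^{[mnp} δ_{d]}^{q]}`, antisymmetrizing separately over the lower
  index group `a,b,c,d` and the upper index group `m,n,p,q`. -/
theorem psi_psi_contraction (a b c d m n p q : Fin 7) :
    psi a b c d * psi m n p q =
      24 * alt4 (fun a' b' c' d' =>
              alt4 (fun m' n' p' q' => gE a' m' * gE b' n' * gE c' p' * gE d' q') m n p q)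
            a b c d
      + 72 * alt4 (fun a' b' c' d' =>
              alt4 (fun m' n' p' q' => psi a' b' m' n' * gE c' p' * gE d' q') m n p q)
            a b c d
      - 16 * alt4 (fun a' b' c' d' =>
              alt4 (fun m' n' p' q' => phi a' b' c' * phi m' n' p' * gE d' q') m n p q)
            a b c d := by
  have hexpand : psi a b c d * psi m n p q = _ :=
    hodge_mul_hodge isAlternating₃_phi isAlternating₃_phi a b c d m n p q
  rw [sum_sum_sum_phi_mul_phi, alt4_alt4_sum_sum_phi_mul_phi, alt4_alt4_sum_phi_mul_phi]
    at hexpand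
  linear_combination hexpand
end

section
/- If ω is an antisymmetric 2-tensor on ℝ^7 satisfying ω_{ab} φ^{ab}{}_{c} = 0 for all c (i.e. ω lies in the 14-dimensional component Λ²₁₄), then ω_{ab} ψ^{ab}{}_{cd} = −2 ω_{cd} for all c, d, where ψ is the Hodge dual 4-form of the standard G₂ 3-form φ. -/
open scoped BigOperators

/-!
The forms `φ` and `ψ` are tied together by the contraction identity
`φ_{abe} φ_{cd}{}^e = g_{ac} g_{bd} - g_{ad} g_{bc} + ψ_{abcd}`. Contracted with any 2-tensor `ω`
it gives `ω_{ab} ψ^{ab}{}_{cd} = (ω_{ab} φ^{ab}{}_e) φ_{cd}{}^e - ω_{cd} + ω_{dc}`, whose first term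
vanishes on `Λ²₁₄` and whose last two add up to `-2 ω_{cd}` for antisymmetric `ω`.

The identity itself is a finite check. Since `ε` is antisymmetric in its last three indices, the
Hodge dual collapses to one Levi-Civita symbol per monomial of `φ`, so all components are integers
that can be compared by evaluation.
-/

namespace G2Structure

/-- The antisymmetrization of a 3-tensor, without the factor `1 / 6`. -/
def antisymmetrize₃ {ι M : Type*} [AddGroup M] (g : ι → ι → ι → M) (a b c : ι) : M :=
  g a b c - g a c b + g b c a - g b a c + g c a b - g c b a

theorem sum_mul_antisymmetrize₃ {ι R : Type*} [Fintype ι] [Ring R] {f : ι → ι → ι → R}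
    (swap_left : ∀ a b c, f b a c = -f a b c) (swap_right : ∀ a b c, f a c b = -f a b c)
    (g : ι → ι → ι → R) :
    ∑ a, ∑ b, ∑ c, f a b c * antisymmetrize₃ g a b c = 6 * ∑ a, ∑ b, ∑ c, f a b c * g a b c := by
  have pull_left (h : ι → ι → ι → R) :
      ∑ a, ∑ b, ∑ c, f a b c * h b a c = -∑ a, ∑ b, ∑ c, f a b c * h a b c := by
    rw [Finset.sum_comm]
    simp only [← Finset.sum_neg_distrib, ← neg_mul, ← swap_left]
  have pull_right (h : ι → ι → ι → R) :
      ∑ a, ∑ b, ∑ c, f a b c * h a c b = -∑ a, ∑ b, ∑ c, f a b c * h a b c := by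
    simp only [← Finset.sum_neg_distrib, ← neg_mul, ← swap_right]
    exact Finset.sum_congr rfl fun a _ => Finset.sum_comm
  simp only [antisymmetrize₃, mul_add, mul_sub, Finset.sum_add_distrib, Finset.sum_sub_distrib]
  rw [pull_right fun a b c => g b c a, pull_left fun a b c => g a c b,
    pull_right fun a b c => g b a c, pull_left g, pull_right g]
  noncomm_ring

section OrderSign

variable {α : Type*} [LinearOrder α]

/-- The sign of the ordering of a pair: `1` if increasing, `0` if constant, `-1` if decreasing. -/
def pairSign (x y : α) : ℤ :=
  if x < y then 1 else if x = y then 0 else -1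

/-- The Levi-Civita symbol of a list of indices, i.e. the product of `pairSign` over all pairs of
positions. The recursion on lists, rather than a product over `Fin n`, keeps it cheap to evaluate
in the kernel. -/
def listSign : List α → ℤ
  | [] => 1
  | x :: xs => (xs.map (pairSign x)).prod * listSign xs

theorem listSign_ofFn {n : ℕ} (v : Fin n → α) :
    listSign (List.ofFn v) = ∏ i, ∏ j > i, pairSign (v i) (v j) := by
  induction n with
  | zero => simp [listSign]
  | succ n ih =>
    simp only [List.ofFn_succ, listSign, List.map_ofFn, List.prod_ofFn, Function.comp_apply, ih,
      Fin.prod_univ_succ, Fin.prod_Ioi_zero, Fin.prod_Ioi_succ]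

theorem listSign_ofFn_eq_zero_of_not_injective {n : ℕ} {v : Fin n → α}
    (hv : ¬Function.Injective v) : listSign (List.ofFn v) = 0 := by
  obtain ⟨i, j, hvij, hij⟩ : ∃ i j, v i = v j ∧ i < j := by
    contrapose! hv
    exact Function.Injective.of_lt_imp_ne fun i j hij hvij => (hv i j hvij).not_gt hij
  rw [listSign_ofFn]
  refine Finset.prod_eq_zero (Finset.mem_univ i) (Finset.prod_eq_zero (Finset.mem_Ioi.2 hij) ?_)
  simp [pairSign, hvij]

end OrderSign

theorem listSign_ofFn_perm {n : ℕ} (σ : Equiv.Perm (Fin n)) :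
    listSign (List.ofFn σ) = Equiv.Perm.sign σ := by
  rw [listSign_ofFn, Equiv.Perm.sign_eq_prod_prod_Ioi]
  push_cast
  refine Finset.prod_congr rfl fun i _ => Finset.prod_congr rfl fun j hij => ?_
  have hσ : σ i ≠ σ j := σ.injective.ne (Finset.mem_Ioi.1 hij).ne
  simp only [pairSign, hσ, if_false, apply_ite Units.val, Units.val_one, Units.val_neg]

theorem eps_eq_listSign (v : Fin 7 → Fin 7) : eps v = listSign (List.ofFn v) := by
  by_cases hv : Function.Bijective v
  · rw [eps, dif_pos hv, ← listSign_ofFn_perm, Equiv.coe_ofBijective]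
  · rw [eps, dif_neg hv, listSign_ofFn_eq_zero_of_not_injective
      (mt Finite.injective_iff_bijective.1 hv), Int.cast_zero]

theorem eps_comp_perm (v : Fin 7 → Fin 7) (σ : Equiv.Perm (Fin 7)) :
    eps (v ∘ σ) = ((Equiv.Perm.sign σ : ℤ) : ℝ) * eps v := by
  by_cases hv : Function.Bijective v
  · have hvσ : Function.Bijective (v ∘ σ) := hv.comp σ.bijective
    have ofBijective_comp : Equiv.ofBijective (v ∘ σ) hvσ = Equiv.ofBijective v hv * σ :=
      Equiv.ext fun _ => rfl
    rw [eps, eps, dif_pos hv, dif_pos hvσ, ofBijective_comp, Equiv.Perm.sign_mul, mul_comm,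
      Units.val_mul, Int.cast_mul]
  · have hvσ : ¬Function.Bijective (v ∘ σ) := mt (Function.Bijective.of_comp_iff v σ.bijective).1 hv
    rw [eps, eps, dif_neg hv, dif_neg hvσ, mul_zero]

theorem eps_comp_swap (v : Fin 7 → Fin 7) {i j : Fin 7} (hij : i ≠ j) :
    eps (v ∘ Equiv.swap i j) = -eps v := by
  simp [eps_comp_perm, Equiv.Perm.sign_swap hij]

/-- The components of `phi0` as integers, for evaluation in the kernel. -/
def phi0Int : ℕ → ℕ → ℕ → ℤ
  | 0, 1, 2 => 1
  | 0, 3, 4 => 1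
  | 0, 5, 6 => 1
  | 1, 3, 5 => 1
  | 1, 4, 6 => -1
  | 2, 3, 6 => -1
  | 2, 4, 5 => -1
  | _, _, _ => 0

theorem phi0_eq_phi0Int (a b c : ℕ) : phi0 a b c = phi0Int a b c := by
  unfold phi0 phi0Int
  split <;> simp

theorem phi_eq_antisymmetrize₃ (a b c : Fin 7) :
    phi a b c = antisymmetrize₃ (fun m n p : Fin 7 => phi0 m n p) a b c := rfl

/-- The components of `phi` as integers, for evaluation in the kernel. -/
def phiInt (a b c : Fin 7) : ℤ :=
  antisymmetrize₃ (fun m n p : Fin 7 => phi0Int m n p) a b c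

theorem phi_eq_phiInt (a b c : Fin 7) : phi a b c = phiInt a b c := by
  simp [phi_eq_antisymmetrize₃, phiInt, antisymmetrize₃, phi0_eq_phi0Int]

/-- The components of `psi` as integers, for evaluation in the kernel: one term
`⋆(e^m ∧ e^n ∧ e^p)` for each monomial of `φ`. -/
def psiInt (a b c d : Fin 7) : ℤ :=
  listSign [a, b, c, d, 0, 1, 2] + listSign [a, b, c, d, 0, 3, 4]
    + listSign [a, b, c, d, 0, 5, 6] + listSign [a, b, c, d, 1, 3, 5]
    - listSign [a, b, c, d, 1, 4, 6] - listSign [a, b, c, d, 2, 3, 6]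
    - listSign [a, b, c, d, 2, 4, 5]

theorem sum_mul_phi0 (f : Fin 7 → Fin 7 → Fin 7 → ℝ) :
    ∑ m, ∑ n, ∑ p, f m n p * phi0 m n p =
      f 0 1 2 + f 0 3 4 + f 0 5 6 + f 1 3 5 - f 1 4 6 - f 2 3 6 - f 2 4 5 := by
  simp [Fin.sum_univ_seven, phi0, sub_eq_add_neg, add_assoc]

theorem psi_eq_psiInt (a b c d : Fin 7) : psi a b c d = psiInt a b c d := by
  have swap_mn (m n p : Fin 7) : eps ![a, b, c, d, n, m, p] = -eps ![a, b, c, d, m, n, p] := by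
    rw [← eps_comp_swap _ (show (4 : Fin 7) ≠ 5 by decide)]
    congr 1
    ext i
    fin_cases i <;> rfl
  have swap_np (m n p : Fin 7) : eps ![a, b, c, d, m, p, n] = -eps ![a, b, c, d, m, n, p] := by
    rw [← eps_comp_swap _ (show (5 : Fin 7) ≠ 6 by decide)]
    congr 1
    ext i
    fin_cases i <;> rfl
  calc psi a b c d
      = 1 / 6 * (6 * ∑ m, ∑ n, ∑ p : Fin 7, eps ![a, b, c, d, m, n, p] * phi0 m n p) := by
        simp only [psi, phi_eq_antisymmetrize₃, sum_mul_antisymmetrize₃ swap_mn swap_np]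
    _ = ∑ m, ∑ n, ∑ p : Fin 7, eps ![a, b, c, d, m, n, p] * phi0 m n p := by ring
    _ = psiInt a b c d := by
        rw [sum_mul_phi0 fun m n p => eps ![a, b, c, d, m, n, p]]
        simp [psiInt, eps_eq_listSign]

theorem sum_phiInt_mul_phiInt : ∀ a b c d : Fin 7,
    ∑ e, phiInt a b e * phiInt c d e =
      (if a = c then 1 else 0) * (if b = d then 1 else 0)
        - (if a = d then 1 else 0) * (if b = c then 1 else 0) + psiInt a b c d := by
  decide +kernel

theorem sum_phi_mul_phi (a b c d : Fin 7) :
    ∑ e, phi a b e * phi c d e = gE a c * gE b d - gE a d * gE b c + psi a b c d := by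
  simp only [phi_eq_phiInt, psi_eq_psiInt, gE]
  exact_mod_cast sum_phiInt_mul_phiInt a b c d

theorem sum_mul_gE_mul_gE (ω : Matrix (Fin 7) (Fin 7) ℝ) (c d : Fin 7) :
    ∑ a, ∑ b, ω a b * (gE a c * gE b d) = ω c d := by
  simp [gE]

theorem sum_mul_psi (ω : Matrix (Fin 7) (Fin 7) ℝ) (c d : Fin 7) :
    ∑ a, ∑ b, ω a b * psi a b c d =
      ∑ e, (∑ a, ∑ b, ω a b * phi a b e) * phi c d e - ω c d + ω d c := by
  have psi_eq (a b : Fin 7) : psi a b c d =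
      ∑ e, phi a b e * phi c d e - gE a c * gE b d + gE a d * gE b c := by
    rw [sum_phi_mul_phi]
    ring
  have contract_phi : ∑ a, ∑ b, ω a b * ∑ e, phi a b e * phi c d e =
      ∑ e, (∑ a, ∑ b, ω a b * phi a b e) * phi c d e := by
    simp only [Finset.mul_sum, Finset.sum_mul, mul_assoc]
    rw [Finset.sum_comm_cycle]
  simp only [psi_eq, mul_add, mul_sub, Finset.sum_add_distrib, Finset.sum_sub_distrib,
    contract_phi, sum_mul_gE_mul_gE]

end G2Structure

/-- If an antisymmetric 2-tensor `ω` lies in `Λ²₁₄`, i.e. `ω_{ab} φ^{ab}{}_c = 0`,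
then `ω_{ab} ψ^{ab}{}_{cd} = -2 ω_{cd}`. -/
theorem lam2_14_psi_contraction (ω : Matrix (Fin 7) (Fin 7) ℝ)
    (hskew : ∀ a b, ω b a = -ω a b)
    (h14 : ∀ c : Fin 7, ∑ a : Fin 7, ∑ b : Fin 7, ω a b * phi a b c = 0)
    (c d : Fin 7) :
    ∑ a : Fin 7, ∑ b : Fin 7, ω a b * psi a b c d = -2 * ω c d := by
  rw [G2Structure.sum_mul_psi, hskew c d]
  simp only [h14, zero_mul, Finset.sum_const_zero]
  ring
end

section
/- Let A and B be symmetric positive-definite real 7×7 matrices, and define their G₂ product A ∘ B to be the matrix with entries (A ∘ B)_{ab} = φ_{amn} φ_{bpq} A^{mp} B^{nq}, where φ is the standard G₂ 3-form on ℝ^7. Then A ∘ B is a symmetric positive-definite matrix. -/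
open scoped BigOperators

/-- The G₂ product of two 2-tensors, `(A ∘ B)_{ab} = φ_{amn} φ_{bpq} A^{mp} B^{nq}`. -/
noncomputable def g2prod (A B : Matrix (Fin 7) (Fin 7) ℝ) (a b : Fin 7) : ℝ :=
  ∑ m : Fin 7, ∑ n : Fin 7, ∑ p : Fin 7, ∑ q : Fin 7,
    phi a m n * phi b p q * A m p * B n q

/-!
Regard `φ` as the linear map `Φ : v ↦ v ⌟ φ` from `ℝ⁷` to `ℝ⁷ ⊗ ℝ⁷`. Then `A ∘ B` is the congruence
`Φᵀ (A ⊗ B) Φ` of the positive-definite matrix `A ⊗ B`, so it suffices that `Φ` is injective. It is,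
because every `e_a` is the cross product of two basis vectors `e_m`, `e_n`: the `(m, n)` component
of `v ⌟ φ` is then exactly `v_a`.
-/

section Matrix

open scoped Matrix

variable {m n R : Type*} [Fintype n]

lemma posDef_iff_forall_sum_pos [CommRing R] [PartialOrder R] [StarRing R] [TrivialStar R]
    {A : Matrix n n R} :
    A.PosDef ↔ (∀ i j, A i j = A j i) ∧ ∀ v : n → R, v ≠ 0 → 0 < ∑ i, ∑ j, v i * v j * A i j := by
  have sum_eq (v : n → R) : ∑ i, ∑ j, v i * v j * A i j = star v ⬝ᵥ A *ᵥ v := by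
    simp only [dotProduct, Matrix.mulVec, Finset.mul_sum, star_trivial]
    exact Finset.sum_congr rfl fun i _ => Finset.sum_congr rfl fun j _ => by ring
  simp only [Matrix.posDef_iff_dotProduct_mulVec, Matrix.IsHermitian.ext_iff, star_trivial, sum_eq]
  exact and_congr_left' forall_comm

lemma mulVec_injective_of_exists_row_eq_single [NonAssocSemiring R] [DecidableEq n]
    {M : Matrix m n R} (h : ∀ j, ∃ i, M.row i = Pi.single j 1) : Function.Injective M.mulVec := by
  intro v w hvw
  ext j
  obtain ⟨i, hi⟩ := h j
  have mulVec_apply (u : n → R) : (M *ᵥ u) i = u j := by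
    rw [← single_one_dotProduct j u, ← hi]
    rfl
  rw [← mulVec_apply v, ← mulVec_apply w, hvw]

end Matrix

section G2

open scoped Matrix Kronecker

lemma exists_phi_eq_ite (a : Fin 7) : ∃ m n, ∀ b, phi b m n = if b = a then 1 else 0 := by
  fin_cases a <;>
    [use 1, 2; use 2, 0; use 0, 1; use 4, 0; use 0, 3; use 6, 0; use 0, 5] <;>
    intro b <;> fin_cases b <;> simp [phi, phi0]

/-- The matrix of the interior product `v ↦ v ⌟ φ` from `ℝ⁷` to 2-tensors. Rows are indexed by the
two free slots of `φ`, matching the index type of a Kronecker product. -/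
def phiMatrix : Matrix (Fin 7 × Fin 7) (Fin 7) ℝ :=
  Matrix.of fun mn a => phi a mn.1 mn.2

lemma phiMatrix_mulVec_injective : Function.Injective phiMatrix.mulVec := by
  refine mulVec_injective_of_exists_row_eq_single fun a => ?_
  obtain ⟨m, n, h⟩ := exists_phi_eq_ite a
  refine ⟨(m, n), funext fun b => ?_⟩
  rw [Pi.single_apply]
  exact h b

lemma of_g2prod_eq (A B : Matrix (Fin 7) (Fin 7) ℝ) :
    Matrix.of (g2prod A B) = phiMatrixᴴ * (A ⊗ₖ B) * phiMatrix := by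
  rw [Matrix.mul_assoc]
  ext a b
  simp only [g2prod, phiMatrix, Matrix.of_apply, Matrix.mul_apply,
    Matrix.conjTranspose_apply, Matrix.kroneckerMap_apply, star_trivial, Fintype.sum_prod_type,
    Finset.mul_sum]
  refine Finset.sum_congr rfl fun m _ => Finset.sum_congr rfl fun n _ =>
    Finset.sum_congr rfl fun p _ => Finset.sum_congr rfl fun q _ => ?_
  ring

lemma of_g2prod_posDef {A B : Matrix (Fin 7) (Fin 7) ℝ} (hA : A.PosDef) (hB : B.PosDef) :
    (Matrix.of (g2prod A B)).PosDef := by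
  rw [of_g2prod_eq]
  exact (hA.kronecker hB).conjTranspose_mul_mul_same phiMatrix_mulVec_injective

end G2

/-- If `A` and `B` are symmetric positive-definite `7 × 7` matrices, then so is
their G₂ product `A ∘ B`. -/
theorem g2prod_posDef (A B : Matrix (Fin 7) (Fin 7) ℝ)
    (hAsymm : ∀ a b, A a b = A b a)
    (hApos : ∀ v : Fin 7 → ℝ, v ≠ 0 → 0 < ∑ a : Fin 7, ∑ b : Fin 7, v a * v b * A a b)
    (hBsymm : ∀ a b, B a b = B b a)
    (hBpos : ∀ v : Fin 7 → ℝ, v ≠ 0 → 0 < ∑ a : Fin 7, ∑ b : Fin 7, v a * v b * B a b) :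
    (∀ a b, g2prod A B a b = g2prod A B b a) ∧
    (∀ v : Fin 7 → ℝ, v ≠ 0 →
      0 < ∑ a : Fin 7, ∑ b : Fin 7, v a * v b * g2prod A B a b) := by
  have hA : A.PosDef := posDef_iff_forall_sum_pos.2 ⟨hAsymm, hApos⟩
  have hB : B.PosDef := posDef_iff_forall_sum_pos.2 ⟨hBsymm, hBpos⟩
  exact posDef_iff_forall_sum_pos.1 (of_g2prod_posDef hA hB)
end
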